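/- Fix A > 0 and a family of constants (C_j). There are constants C′ > 0 and 0 < c₁ < c₂ with the following property. Let Y ≥ 1 and let w : ℝ → ℂ be smooth, supported in [Y/2, 3Y], with |w^{(j)}(y)| ≤ C_j Y^{−j} for all j ≥ 0. Define f(t) = (1/2π) ∫_0^∞ w(y) e(y) y^{−it} dy/y for real t. Then: (i) |f(t)| ≤ C′ (|t| + Y)^{−A} for every real t with t ∉ [c₁ Y, c₂ Y]; and (ii) |f(t)| ≤ C′ Y^{−1/2} for every real t. -/

import Mathlib

open MeasureTheory

/-- `e(x) = e^{2πix}`. -/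
noncomputable def eexp (x : ℝ) : ℂ := Complex.exp (2 * Real.pi * Complex.I * x)

/-- The Mellin transform `f(t) = (1/2π) ∫₀^∞ w(y) e(y) y^{-it} dy/y` of a smoothly
truncated exponential. -/
noncomputable def mellinTruncExp (w : ℝ → ℂ) (t : ℝ) : ℂ :=
  (1 / (2 * Real.pi) : ℝ) *
    ∫ y in Set.Ioi (0 : ℝ), w y * eexp y * ((y : ℝ) : ℂ) ^ (-(Complex.I * t)) / y

/-!
With `y = Y e^v` the transform becomes an oscillatory integral over `[log α, log β]` with phase
`2πY e^v - t (log Y + v)`, whose derivative `2πY e^v - t` is `≫ |t| + Y` unless `t ≍ Y`: repeated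
integration by parts gains a factor `|t| + Y` each time. For every `t` the second derivative
`2πY e^v` is `≫ Y`, and van der Corput's second derivative test gives the square-root saving. The
constants are uniform because the normalised amplitudes `v ↦ w (Y e^v)` and phase derivatives
`(2πY e^v - t) / (|t| + Y)` form bounded families in `C^N`.
-/

section OscillatoryIntegrals

open Set Real

variable {a b : ℝ}

theorem hasDerivAt_cexp_ofReal_mul_I {φ : ℝ → ℝ} {φ' x : ℝ} (hφ : HasDerivAt φ φ' x) :
    HasDerivAt (fun x => Complex.exp (φ x * Complex.I))
      (Complex.exp (φ x * Complex.I) * (φ' * Complex.I)) x :=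
  (hφ.ofReal_comp.mul_const Complex.I).cexp

theorem integral_mul_deriv_mul_cexp {φ φ' : ℝ → ℝ} {g g' : ℝ → ℂ}
    (hφ : ∀ x ∈ uIcc a b, HasDerivAt φ (φ' x) x) (hφ' : ContinuousOn φ' (uIcc a b))
    (hg : ∀ x ∈ uIcc a b, HasDerivAt g (g' x) x) (hg' : ContinuousOn g' (uIcc a b))
    (hga : g a = 0) (hgb : g b = 0) :
    ∫ x in a..b, g x * φ' x * Complex.exp (φ x * Complex.I) =
      Complex.I * ∫ x in a..b, g' x * Complex.exp (φ x * Complex.I) := by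
  have hexp : ContinuousOn (fun x => Complex.exp (φ x * Complex.I)) (uIcc a b) :=
    HasDerivAt.continuousOn fun x hx => hasDerivAt_cexp_ofReal_mul_I (hφ x hx)
  have hφ'ℂ : ContinuousOn (fun x => (φ' x : ℂ)) (uIcc a b) :=
    Complex.continuous_ofReal.comp_continuousOn hφ'
  have parts := intervalIntegral.integral_mul_deriv_eq_deriv_mul hg
    (fun x hx => hasDerivAt_cexp_ofReal_mul_I (hφ x hx))
    hg'.intervalIntegrable (hexp.mul (hφ'ℂ.mul continuousOn_const)).intervalIntegrable
  rw [hga, hgb, zero_mul, zero_mul, sub_zero, zero_sub] at parts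
  calc ∫ x in a..b, g x * φ' x * Complex.exp (φ x * Complex.I)
      = -Complex.I * ∫ x in a..b,
          g x * (Complex.exp (φ x * Complex.I) * (φ' x * Complex.I)) := by
        rw [← intervalIntegral.integral_const_mul]
        congr 1 with x
        linear_combination (g x * φ' x * Complex.exp (φ x * Complex.I)) * Complex.I_mul_I
    _ = Complex.I * ∫ x in a..b, g' x * Complex.exp (φ x * Complex.I) := by
        rw [parts, neg_mul_neg]

theorem integral_mul_cexp_eq_of_multiplier {φ φ' r r' : ℝ → ℝ} {g g' : ℝ → ℂ}
    (hφ : ∀ x ∈ uIcc a b, HasDerivAt φ (φ' x) x) (hφ' : ContinuousOn φ' (uIcc a b))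
    (hr : ∀ x ∈ uIcc a b, HasDerivAt r (r' x) x) (hr' : ContinuousOn r' (uIcc a b))
    (hg : ∀ x ∈ uIcc a b, HasDerivAt g (g' x) x) (hg' : ContinuousOn g' (uIcc a b))
    (hga : g a = 0) (hgb : g b = 0) :
    ∫ x in a..b, g x * Complex.exp (φ x * Complex.I) =
      ∫ x in a..b, (g x * ((1 - r x * φ' x : ℝ) : ℂ) +
        Complex.I * (g' x * r x + g x * r' x)) * Complex.exp (φ x * Complex.I) := by
  have hgc : ContinuousOn g (uIcc a b) := HasDerivAt.continuousOn hg
  have hrc : ContinuousOn r (uIcc a b) := HasDerivAt.continuousOn hr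
  have hφc : ContinuousOn φ (uIcc a b) := HasDerivAt.continuousOn hφ
  have parts := integral_mul_deriv_mul_cexp hφ hφ'
    (fun x hx => (hg x hx).fun_mul (hr x hx).ofReal_comp) (by fun_prop)
    (by rw [hga, zero_mul]) (by rw [hgb, zero_mul])
  calc ∫ x in a..b, g x * Complex.exp (φ x * Complex.I)
      = (∫ x in a..b, g x * ((1 - r x * φ' x : ℝ) : ℂ) * Complex.exp (φ x * Complex.I)) +
          ∫ x in a..b, g x * r x * φ' x * Complex.exp (φ x * Complex.I) := by
        rw [← intervalIntegral.integral_add (ContinuousOn.intervalIntegrable (by fun_prop))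
          (ContinuousOn.intervalIntegrable (by fun_prop))]
        congr 1 with x
        push_cast
        ring
    _ = _ := by
        rw [parts, ← intervalIntegral.integral_const_mul,
          ← intervalIntegral.integral_add (ContinuousOn.intervalIntegrable (by fun_prop))
            (ContinuousOn.intervalIntegrable (by fun_prop))]
        congr 1 with x
        ring

theorem abs_div_sq_add_sq_le (h : ℝ) {s : ℝ} (hs : 0 < s) :
    |h / (h ^ 2 + s ^ 2)| ≤ 1 / (2 * s) := by
  have hq : 0 < h ^ 2 + s ^ 2 := by positivity
  rw [abs_div, abs_of_pos hq, div_le_div_iff₀ hq (by positivity), ← sq_abs h]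
  linarith [two_mul_le_add_sq |h| s]

theorem hasDerivAt_div_sq_add_sq {h : ℝ → ℝ} {h' x s : ℝ} (hs : s ≠ 0) (hh : HasDerivAt h h' x) :
    HasDerivAt (fun x => h x / (h x ^ 2 + s ^ 2))
      (h' * (s ^ 2 - h x ^ 2) / (h x ^ 2 + s ^ 2) ^ 2) x := by
  have hq : h x ^ 2 + s ^ 2 ≠ 0 := by positivity
  refine (hh.div ((hh.fun_pow 2).add_const (s ^ 2)) hq).congr_deriv ?_
  congr 1
  push_cast
  ring

theorem abs_deriv_div_sq_add_sq_le (h h' : ℝ) {s : ℝ} (hs : s ≠ 0) :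
    |h' * (s ^ 2 - h ^ 2) / (h ^ 2 + s ^ 2) ^ 2| ≤ |h'| / (h ^ 2 + s ^ 2) := by
  have hq : 0 < h ^ 2 + s ^ 2 := by positivity
  have hnum : |s ^ 2 - h ^ 2| ≤ h ^ 2 + s ^ 2 :=
    abs_le.2 ⟨by linarith [sq_nonneg s], by linarith [sq_nonneg h]⟩
  rw [abs_div, abs_mul, abs_of_pos (pow_pos hq 2), div_le_div_iff₀ (pow_pos hq 2) hq]
  calc |h'| * |s ^ 2 - h ^ 2| * (h ^ 2 + s ^ 2)
      ≤ |h'| * (h ^ 2 + s ^ 2) * (h ^ 2 + s ^ 2) := by gcongr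
    _ = |h'| * (h ^ 2 + s ^ 2) ^ 2 := by ring

theorem integral_deriv_div_sq_add_sq_le {h h' : ℝ → ℝ} {s : ℝ} (hs : 0 < s)
    (hh : ∀ x ∈ uIcc a b, HasDerivAt h (h' x) x)
    (hint : IntervalIntegrable (fun x => h' x / (h x ^ 2 + s ^ 2)) volume a b) :
    ∫ x in a..b, h' x / (h x ^ 2 + s ^ 2) ≤ π / s := by
  have hderiv : ∀ x ∈ uIcc a b,
      HasDerivAt (fun x => arctan (h x / s) / s) (h' x / (h x ^ 2 + s ^ 2)) x := fun x hx => by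
    refine (((hh x hx).div_const s).arctan.div_const s).congr_deriv ?_
    have hq : h x ^ 2 + s ^ 2 ≠ 0 := by positivity
    have hq' : s ^ 2 + h x ^ 2 ≠ 0 := by positivity
    field_simp
    ring
  rw [intervalIntegral.integral_eq_sub_of_hasDerivAt hderiv hint, ← sub_div]
  gcongr
  linarith [arctan_lt_pi_div_two (h b / s), neg_pi_div_two_lt_arctan (h a / s)]

theorem norm_mul_one_sub_multiplier_add_le {z z' : ℂ} {h h' s M M' : ℝ} (hs : 0 < s)
    (hsh : s ^ 2 ≤ h') (hz : ‖z‖ ≤ M) (hz' : ‖z'‖ ≤ M') :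
    ‖z * ((1 - h / (h ^ 2 + s ^ 2) * h : ℝ) : ℂ) +
        Complex.I * (z' * ((h / (h ^ 2 + s ^ 2) : ℝ) : ℂ) +
          z * ((h' * (s ^ 2 - h ^ 2) / (h ^ 2 + s ^ 2) ^ 2 : ℝ) : ℂ))‖ ≤
      2 * M * (h' / (h ^ 2 + s ^ 2)) + M' * (1 / (2 * s)) := by
  have hM : 0 ≤ M := (norm_nonneg _).trans hz
  have hM' : 0 ≤ M' := (norm_nonneg _).trans hz'
  have hstationary : |1 - h / (h ^ 2 + s ^ 2) * h| ≤ h' / (h ^ 2 + s ^ 2) := by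
    have hsplit : 1 - h / (h ^ 2 + s ^ 2) * h = s ^ 2 / (h ^ 2 + s ^ 2) := by
      field_simp
      ring
    rw [hsplit, abs_of_nonneg (by positivity)]
    gcongr
  have hr := abs_div_sq_add_sq_le h hs
  have hr' := abs_deriv_div_sq_add_sq_le h h' hs.ne'
  rw [abs_of_nonneg ((sq_nonneg s).trans hsh)] at hr'
  calc _ ≤ ‖z‖ * |1 - h / (h ^ 2 + s ^ 2) * h| + (‖z'‖ * |h / (h ^ 2 + s ^ 2)| +
          ‖z‖ * |h' * (s ^ 2 - h ^ 2) / (h ^ 2 + s ^ 2) ^ 2|) := by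
        refine (norm_add_le _ _).trans ?_
        rw [norm_mul, norm_mul Complex.I, Complex.norm_I, one_mul, Complex.norm_real, norm_eq_abs]
        gcongr
        refine (norm_add_le _ _).trans ?_
        rw [norm_mul, norm_mul, Complex.norm_real, Complex.norm_real, norm_eq_abs, norm_eq_abs]
    _ ≤ M * (h' / (h ^ 2 + s ^ 2)) + (M' * (1 / (2 * s)) + M * (h' / (h ^ 2 + s ^ 2))) := by
        gcongr
    _ = _ := by ring

/- The proof smooths the usual van der Corput splitting: with `r = φ' / (φ'² + s²)`, the factor
`1 - r φ' = s² / (φ'² + s²)` isolates the stationary point, and `r` is integrated by parts. As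
`|r| ≤ 1 / (2s)`, what remains is controlled by `φ'' / (φ'² + s²)`, the derivative of an
arctangent divided by `s`. -/
theorem norm_integral_mul_cexp_le_of_second_deriv {φ φ' φ'' : ℝ → ℝ} {g g' : ℝ → ℂ} {s M M' : ℝ}
    (hab : a ≤ b) (hs : 0 < s) (hφ : ∀ x ∈ Icc a b, HasDerivAt φ (φ' x) x)
    (hφ' : ∀ x ∈ Icc a b, HasDerivAt φ' (φ'' x) x) (hφ'' : ContinuousOn φ'' (Icc a b))
    (hsφ : ∀ x ∈ Icc a b, s ^ 2 ≤ φ'' x)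
    (hg : ∀ x ∈ Icc a b, HasDerivAt g (g' x) x) (hg' : ContinuousOn g' (Icc a b))
    (hga : g a = 0) (hgb : g b = 0)
    (hM : ∀ x ∈ Icc a b, ‖g x‖ ≤ M) (hM' : ∀ x ∈ Icc a b, ‖g' x‖ ≤ M') :
    ‖∫ x in a..b, g x * Complex.exp (φ x * Complex.I)‖ ≤
      (2 * π * M + (b - a) / 2 * M') / s := by
  have hM0 : 0 ≤ M := (norm_nonneg _).trans (hM a (left_mem_Icc.2 hab))
  have hq : ∀ x, φ' x ^ 2 + s ^ 2 ≠ 0 := fun x => by positivity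
  rw [← uIcc_of_le hab] at hφ hφ' hφ'' hg hg'
  have hφ'c : ContinuousOn φ' (uIcc a b) := HasDerivAt.continuousOn hφ'
  have hint : IntervalIntegrable (fun x => φ'' x / (φ' x ^ 2 + s ^ 2)) volume a b :=
    ContinuousOn.intervalIntegrable (by fun_prop (disch := simp [hq]))
  have harctan := integral_deriv_div_sq_add_sq_le hs hφ' hint
  rw [integral_mul_cexp_eq_of_multiplier hφ hφ'c
    (fun x hx => hasDerivAt_div_sq_add_sq hs.ne' (hφ' x hx))
    (by fun_prop (disch := simp [hq])) hg hg' hga hgb]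
  refine (intervalIntegral.norm_integral_le_of_norm_le hab
    (g := fun x => 2 * M * (φ'' x / (φ' x ^ 2 + s ^ 2)) + M' * (1 / (2 * s)))
    (.of_forall fun x hx => ?_) ((hint.const_mul _).add intervalIntegrable_const)).trans ?_
  · have hx := Ioc_subset_Icc_self hx
    rw [norm_mul, Complex.norm_exp_ofReal_mul_I, mul_one]
    exact norm_mul_one_sub_multiplier_add_le hs (hsφ x hx) (hM x hx) (hM' x hx)
  · rw [intervalIntegral.integral_add (hint.const_mul _) intervalIntegrable_const,
      intervalIntegral.integral_const, intervalIntegral.integral_const_mul, smul_eq_mul]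
    calc _ ≤ 2 * M * (π / s) + (b - a) * (M' * (1 / (2 * s))) := by gcongr
      _ = _ := by field_simp

end OscillatoryIntegrals

section UniformFamilies

open Set

variable {ι : Type*} {s z : Set ℝ} {n : ℕ} {F G : ι → ℝ → ℂ}

/-- The family of functions `F i` is continuous and uniformly bounded on `s`, and every member
vanishes on `z`. -/
structure UniformBddOn (s z : Set ℝ) (F : ι → ℝ → ℂ) : Prop where
  continuousOn : ∀ i, ContinuousOn (F i) s
  eq_zero : ∀ i, ∀ x ∈ z, F i x = 0
  exists_bound : ∃ B, ∀ i, ∀ x ∈ s, ‖F i x‖ ≤ B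

/-- The family of functions `F i` is bounded in `C^n(s)`, uniformly in `i`, and every member
vanishes on `z` together with its first `n` derivatives. Derivatives are two-sided also at the
boundary points of `s`. -/
def UniformContDiffOn (s z : Set ℝ) : ℕ → (ι → ℝ → ℂ) → Prop
  | 0, F => UniformBddOn s z F
  | n + 1, F => UniformBddOn s z F ∧ ∃ F' : ι → ℝ → ℂ,
      (∀ i, ∀ x ∈ s, HasDerivAt (F i) (F' i x) x) ∧ UniformContDiffOn s z n F'

namespace UniformBddOn

theorem add (hF : UniformBddOn s z F) (hG : UniformBddOn s z G) :
    UniformBddOn s z fun i x => F i x + G i x where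
  continuousOn i := (hF.continuousOn i).add (hG.continuousOn i)
  eq_zero i x hx := by rw [hF.eq_zero i x hx, hG.eq_zero i x hx, add_zero]
  exists_bound := by
    obtain ⟨B, hB⟩ := hF.exists_bound
    obtain ⟨B', hB'⟩ := hG.exists_bound
    exact ⟨B + B', fun i x hx => norm_add_le_of_le (hB i x hx) (hB' i x hx)⟩

theorem mul (hF : UniformBddOn s z F) (hG : UniformBddOn s ∅ G) :
    UniformBddOn s z fun i x => F i x * G i x where
  continuousOn i := (hF.continuousOn i).mul (hG.continuousOn i)
  eq_zero i x hx := by rw [hF.eq_zero i x hx, zero_mul]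
  exists_bound := by
    obtain ⟨B, hB⟩ := hF.exists_bound
    obtain ⟨B', hB'⟩ := hG.exists_bound
    exact ⟨B * B', fun i x hx => norm_mul_le_of_le (hB i x hx) (hB' i x hx)⟩

theorem inv {δ : ℝ} (hδ : 0 < δ) (hF : UniformBddOn s ∅ F)
    (hFδ : ∀ i, ∀ x ∈ s, δ ≤ ‖F i x‖) : UniformBddOn s ∅ fun i x => (F i x)⁻¹ where
  continuousOn i := (hF.continuousOn i).inv₀ fun x hx => norm_pos_iff.1 (hδ.trans_le (hFδ i x hx))
  eq_zero _ _ hx := hx.elim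
  exists_bound := ⟨δ⁻¹, fun i x hx => by
    rw [norm_inv]
    exact inv_anti₀ hδ (hFδ i x hx)⟩

end UniformBddOn

theorem uniformContDiffOn_const {c : ι → ℂ} {B : ℝ} (hc : ∀ i, ‖c i‖ ≤ B) :
    UniformContDiffOn s ∅ n fun i _ => c i := by
  have bdd {c : ι → ℂ} {B : ℝ} (hc : ∀ i, ‖c i‖ ≤ B) : UniformBddOn s ∅ fun i _ => c i :=
    ⟨fun _ => continuousOn_const, fun _ _ hx => hx.elim, B, fun i _ _ => hc i⟩
  induction n generalizing c B with
  | zero => exact bdd hc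
  | succ n ih =>
    exact ⟨bdd hc, fun _ _ => 0, fun i x _ => hasDerivAt_const x (c i),
      ih fun _ => norm_zero.le⟩

theorem uniformContDiffOn_cexp_ofReal (hs : IsCompact s) :
    UniformContDiffOn s ∅ n fun (_ : ι) (x : ℝ) => Complex.exp x := by
  have hcont : ContinuousOn (fun x : ℝ => Complex.exp x) s := by fun_prop
  have bdd : UniformBddOn s ∅ fun (_ : ι) (x : ℝ) => Complex.exp x :=
    ⟨fun _ => hcont, fun _ _ hx => hx.elim,
      (hs.exists_bound_of_continuousOn hcont).imp fun _ hB _ => hB⟩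
  induction n with
  | zero => exact bdd
  | succ n ih => exact ⟨bdd, _, fun _ x _ => (Complex.hasDerivAt_exp x).comp_ofReal, ih⟩

namespace UniformContDiffOn

theorem uniformBddOn (hF : UniformContDiffOn s z n F) : UniformBddOn s z F := by
  cases n with
  | zero => exact hF
  | succ n => exact hF.1

theorem of_succ (hF : UniformContDiffOn s z (n + 1) F) : UniformContDiffOn s z n F := by
  induction n generalizing F with
  | zero => exact hF.1
  | succ n ih =>
    obtain ⟨hF0, F', hderiv, hF'⟩ := hF
    exact ⟨hF0, F', hderiv, ih hF'⟩

theorem add (hF : UniformContDiffOn s z n F) (hG : UniformContDiffOn s z n G) :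
    UniformContDiffOn s z n fun i x => F i x + G i x := by
  induction n generalizing F G with
  | zero => exact UniformBddOn.add hF hG
  | succ n ih =>
    obtain ⟨hF0, F', hFderiv, hF'⟩ := hF
    obtain ⟨hG0, G', hGderiv, hG'⟩ := hG
    exact ⟨hF0.add hG0, _, fun i x hx => (hFderiv i x hx).fun_add (hGderiv i x hx), ih hF' hG'⟩

theorem mul (hF : UniformContDiffOn s z n F) (hG : UniformContDiffOn s ∅ n G) :
    UniformContDiffOn s z n fun i x => F i x * G i x := by
  induction n generalizing F G with
  | zero => exact UniformBddOn.mul hF hG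
  | succ n ih =>
    have ⟨hF0, F', hFderiv, hF'⟩ := hF
    have ⟨hG0, G', hGderiv, hG'⟩ := hG
    exact ⟨hF0.mul hG0, _, fun i x hx => (hFderiv i x hx).fun_mul (hGderiv i x hx),
      (ih hF' hG.of_succ).add (ih hF.of_succ hG')⟩

theorem inv {δ : ℝ} (hδ : 0 < δ) (hF : UniformContDiffOn s ∅ n F)
    (hFδ : ∀ i, ∀ x ∈ s, δ ≤ ‖F i x‖) : UniformContDiffOn s ∅ n fun i x => (F i x)⁻¹ := by
  induction n with
  | zero => exact UniformBddOn.inv hδ hF hFδ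
  | succ n ih =>
    have ⟨hF0, F', hderiv, hF'⟩ := hF
    have hinv := ih hF.of_succ
    refine ⟨hF0.inv hδ hFδ, fun i x => -1 * (F' i x * ((F i x)⁻¹ * (F i x)⁻¹)),
      fun i x hx => ?_, (uniformContDiffOn_const (B := 1) (by simp)).mul
        (hF'.mul (hinv.mul hinv))⟩
    have hne : F i x ≠ 0 := norm_pos_iff.1 (hδ.trans_le (hFδ i x hx))
    refine ((hderiv i x hx).fun_inv hne).congr_deriv ?_
    field_simp

end UniformContDiffOn

theorem uniformContDiffOn_mul_exp_add {c d : ι → ℝ} {B B' : ℝ} (hs : IsCompact s)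
    (hc : ∀ i, |c i| ≤ B) (hd : ∀ i, |d i| ≤ B') :
    UniformContDiffOn s ∅ n fun i x => ((c i * Real.exp x + d i : ℝ) : ℂ) := by
  simpa only [Complex.ofReal_add, Complex.ofReal_mul, Complex.ofReal_exp] using
    ((uniformContDiffOn_const fun i => (Complex.norm_real _).trans_le (hc i)).mul
      (uniformContDiffOn_cexp_ofReal hs)).add
        (uniformContDiffOn_const fun i => (Complex.norm_real _).trans_le (hd i))

theorem exists_norm_integral_mul_cexp_le_div_pow {a b δ : ℝ} {Λ : ι → ℝ} {φ ψ : ι → ℝ → ℝ}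
    {g : ι → ℝ → ℂ} (hδ : 0 < δ) (hΛ : ∀ i, 0 < Λ i)
    (hφ : ∀ i, ∀ x ∈ uIcc a b, HasDerivAt (φ i) (Λ i * ψ i x) x)
    (hψ : UniformContDiffOn (uIcc a b) ∅ n fun i x => (ψ i x : ℂ))
    (hψδ : ∀ i, ∀ x ∈ uIcc a b, δ ≤ |ψ i x|)
    (hg : UniformContDiffOn (uIcc a b) {a, b} n g) :
    ∃ K, ∀ i, ‖∫ x in a..b, g i x * Complex.exp (φ i x * Complex.I)‖ ≤ K / Λ i ^ n := by
  induction n generalizing g with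
  | zero =>
    obtain ⟨B, hB⟩ := hg.uniformBddOn.exists_bound
    refine ⟨B * |b - a|, fun i => ?_⟩
    rw [pow_zero, div_one]
    refine intervalIntegral.norm_integral_le_of_norm_le_const fun x hx => ?_
    rw [norm_mul, Complex.norm_exp_ofReal_mul_I, mul_one]
    exact hB i x (uIoc_subset_uIcc hx)
  | succ n ih =>
    have hψinv := hψ.inv hδ fun i x hx => (hψδ i x hx).trans_eq (Complex.norm_real _).symm
    obtain ⟨hq, q', hqderiv, hq'⟩ := hg.mul hψinv
    obtain ⟨K, hK⟩ := ih hψ.of_succ hq'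
    refine ⟨K, fun i => ?_⟩
    have hψcont : ContinuousOn (ψ i) (uIcc a b) :=
      (Complex.continuous_re.comp_continuousOn (hψ.uniformBddOn.continuousOn i)).congr
        fun x _ => rfl
    have parts := integral_mul_deriv_mul_cexp (hφ i) (continuousOn_const.mul hψcont)
      (hqderiv i) (hq'.uniformBddOn.continuousOn i) (hq.eq_zero i a (by simp))
      (hq.eq_zero i b (by simp))
    have hΛne : (Λ i : ℂ) ≠ 0 := Complex.ofReal_ne_zero.2 (hΛ i).ne'
    have hstep : ∫ x in a..b, g i x * Complex.exp (φ i x * Complex.I) =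
        (Λ i : ℂ)⁻¹ * (Complex.I * ∫ x in a..b, q' i x * Complex.exp (φ i x * Complex.I)) := by
      rw [← parts, ← intervalIntegral.integral_const_mul]
      refine intervalIntegral.integral_congr fun x hx => ?_
      have hψne : (ψ i x : ℂ) ≠ 0 :=
        Complex.ofReal_ne_zero.2 (abs_pos.1 (hδ.trans_le (hψδ i x hx)))
      push_cast
      field_simp
    rw [hstep, norm_mul, norm_mul, Complex.norm_I, one_mul, norm_inv,
      Complex.norm_of_nonneg (hΛ i).le, inv_mul_eq_div, pow_succ, ← div_div]
    exact div_le_div_of_nonneg_right (hK i) (hΛ i).le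

end UniformFamilies

section InertWeights

open Set Real

variable {N : ℕ} {α β Y : ℝ} {C : ℕ → ℝ} {w : ℝ → ℂ}

/-- A weight of class `C^N` living at scale `Y`: it is supported in `[αY, βY]`, and for `j ≤ N`
its `j`-th derivative is at most `C j / Y ^ j`. -/
structure IsInertWeight (N : ℕ) (α β : ℝ) (C : ℕ → ℝ) (Y : ℝ) (w : ℝ → ℂ) : Prop where
  scale_pos : 0 < Y
  contDiff : ContDiff ℝ N w
  support_subset : Function.support w ⊆ Icc (α * Y) (β * Y)
  norm_iteratedDeriv_le : ∀ j ≤ N, ∀ y, ‖iteratedDeriv j w y‖ ≤ C j * Y ^ (-(j : ℝ))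

theorem IsInertWeight.of_le {M : ℕ} (hw : IsInertWeight N α β C Y w) (hMN : M ≤ N) :
    IsInertWeight M α β C Y w where
  scale_pos := hw.scale_pos
  contDiff := hw.contDiff.of_le (by exact_mod_cast hMN)
  support_subset := hw.support_subset
  norm_iteratedDeriv_le j hj := hw.norm_iteratedDeriv_le j (hj.trans hMN)

theorem iteratedDeriv_eq_zero_of_support_subset_Icc {E : Type*} [NormedAddCommGroup E]
    [NormedSpace ℝ E] {w : ℝ → E} {a b x : ℝ} {j : ℕ} (hw : ContDiff ℝ j w)
    (hsupp : Function.support w ⊆ Icc a b) (hx : x ∉ Ioo a b) : iteratedDeriv j w x = 0 := by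
  have hsub : Function.support (iteratedDeriv j w) ⊆ Icc a b := fun y hy =>
    closure_minimal hsupp isClosed_Icc <| support_iteratedFDeriv_subset j <| by
      rwa [Function.mem_support, ← norm_ne_zero_iff, norm_iteratedFDeriv_eq_norm_iteratedDeriv,
        norm_ne_zero_iff]
  have hopen : IsOpen (Function.support (iteratedDeriv j w)) :=
    hw.continuous_iteratedDeriv'.isOpen_support
  by_contra hne
  exact hx (interior_Icc (a := a) (b := b) ▸ interior_maximal hsub hopen hne)

theorem hasDerivAt_iteratedDeriv_comp_mul_exp {j : ℕ} (hw : ContDiff ℝ (j + 1) w) (Y v : ℝ) :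
    HasDerivAt (fun v => (Y : ℂ) ^ j * iteratedDeriv j w (Y * exp v))
      (Y ^ (j + 1) * iteratedDeriv (j + 1) w (Y * exp v) * Complex.exp v) v := by
  have hwj := (hw.differentiable_iteratedDeriv' j (Y * exp v)).hasDerivAt
  rw [← iteratedDeriv_succ] at hwj
  refine ((hwj.scomp v ((hasDerivAt_exp v).const_mul Y)).const_mul ((Y : ℂ) ^ j)).congr_deriv ?_
  rw [Complex.real_smul]
  push_cast
  ring

theorem uniformBddOn_iteratedDeriv_comp_mul_exp {ι : Type*} {Y : ι → ℝ} {w : ι → ℝ → ℂ} {j : ℕ}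
    (hα : 0 < α) (hβ : 0 < β) (hw : ∀ i, IsInertWeight N α β C (Y i) (w i)) (hj : j ≤ N) :
    UniformBddOn (uIcc (log α) (log β)) {log α, log β}
      fun i v => (Y i : ℂ) ^ j * iteratedDeriv j (w i) (Y i * exp v) where
  continuousOn i := by
    have := (hw i).contDiff.continuous_iteratedDeriv j (by exact_mod_cast hj)
    fun_prop
  eq_zero i v hv := by
    rw [iteratedDeriv_eq_zero_of_support_subset_Icc
      ((hw i).contDiff.of_le (by exact_mod_cast hj)) (hw i).support_subset, mul_zero]
    rcases hv with rfl | rfl <;> simp [exp_log, *, mul_comm (Y i)]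
  exists_bound := ⟨C j, fun i v _ => by
    have hY : 0 < Y i ^ j := pow_pos (hw i).scale_pos j
    have hle := (hw i).norm_iteratedDeriv_le j hj (Y i * exp v)
    rw [rpow_neg (hw i).scale_pos.le, rpow_natCast, ← div_eq_mul_inv, le_div_iff₀' hY] at hle
    rwa [norm_mul, ← Complex.ofReal_pow, Complex.norm_of_nonneg hY.le]⟩

theorem uniformContDiffOn_iteratedDeriv_comp_mul_exp {ι : Type*} {Y : ι → ℝ} {w : ι → ℝ → ℂ}
    {j n : ℕ} (hα : 0 < α) (hβ : 0 < β) (hw : ∀ i, IsInertWeight N α β C (Y i) (w i))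
    (hjn : j + n ≤ N) :
    UniformContDiffOn (uIcc (log α) (log β)) {log α, log β} n
      fun i v => (Y i : ℂ) ^ j * iteratedDeriv j (w i) (Y i * exp v) := by
  induction n generalizing j with
  | zero => exact uniformBddOn_iteratedDeriv_comp_mul_exp hα hβ hw hjn
  | succ n ih =>
    refine ⟨uniformBddOn_iteratedDeriv_comp_mul_exp hα hβ hw (by lia), _,
      fun i v _ => hasDerivAt_iteratedDeriv_comp_mul_exp ((hw i).contDiff.of_le ?_) (Y i) v,
      (ih (by lia)).mul (uniformContDiffOn_cexp_ofReal isCompact_uIcc)⟩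
    exact_mod_cast (by lia : j + 1 ≤ N)

theorem uniformContDiffOn_comp_mul_exp {ι : Type*} {Y : ι → ℝ} {w : ι → ℝ → ℂ}
    (hα : 0 < α) (hβ : 0 < β) (hw : ∀ i, IsInertWeight N α β C (Y i) (w i)) :
    UniformContDiffOn (uIcc (log α) (log β)) {log α, log β} N fun i v => w i (Y i * exp v) := by
  simpa using uniformContDiffOn_iteratedDeriv_comp_mul_exp (j := 0) hα hβ hw (by lia)

end InertWeights

section MellinTransform

open Set Real

variable {N : ℕ} {α β Y t v : ℝ} {C : ℕ → ℝ} {w : ℝ → ℂ}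

/-- The phase `2πy - t log y` of `e(y) y^{-it}` at `y = Y e^v`. -/
noncomputable def mellinPhase (Y t v : ℝ) : ℝ := 2 * π * (Y * exp v) - t * (log Y + v)

theorem hasDerivAt_mellinPhase (Y t v : ℝ) :
    HasDerivAt (mellinPhase Y t) (2 * π * (Y * exp v) - t) v :=
  ((((hasDerivAt_exp v).const_mul Y).const_mul (2 * π)).sub
    (((hasDerivAt_id v).const_add (log Y)).const_mul t)).congr_deriv (by rw [mul_one])

theorem eexp_mul_cpow_eq_cexp_mellinPhase (hY : 0 < Y) (t v : ℝ) :
    eexp (Y * exp v) * ((Y * exp v : ℝ) : ℂ) ^ (-(Complex.I * t)) =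
      Complex.exp (mellinPhase Y t v * Complex.I) := by
  have hy : 0 < Y * exp v := by positivity
  rw [eexp, Complex.cpow_def_of_ne_zero (Complex.ofReal_ne_zero.2 hy.ne'), ← Complex.exp_add,
    ← Complex.ofReal_log hy.le, log_mul hY.ne' (exp_ne_zero v), log_exp, mellinPhase]
  push_cast
  ring_nf

theorem integral_Ioi_div_eq_integral_comp_mul_exp (F : ℝ → ℂ) (hY : 0 < Y) :
    ∫ y in Ioi (0 : ℝ), F y / y = ∫ v, F (Y * exp v) := by
  have himage : (fun v => Y * exp v) '' univ = Ioi 0 := by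
    rw [image_univ]
    ext y
    refine ⟨?_, fun hy => ⟨log (y / Y), ?_⟩⟩
    · rintro ⟨v, rfl⟩
      exact mul_pos hY (exp_pos v)
    · simp only [exp_log (div_pos hy hY), mul_div_cancel₀ _ hY.ne']
  rw [← himage, integral_image_eq_integral_abs_deriv_smul MeasurableSet.univ
    (fun v _ => ((hasDerivAt_exp v).const_mul Y).hasDerivWithinAt)
    ((mul_right_injective₀ hY.ne').comp exp_injective).injOn, setIntegral_univ]
  congr 1 with v
  have hy : 0 < Y * exp v := by positivity
  rw [abs_of_pos hy, Complex.real_smul, mul_div_cancel₀ _ (Complex.ofReal_ne_zero.2 hy.ne')]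

theorem mellinTruncExp_eq_integral_mellinPhase (hα : 0 < α) (hαβ : α ≤ β) (hY : 0 < Y)
    (hw : Function.support w ⊆ Icc (α * Y) (β * Y)) (t : ℝ) :
    mellinTruncExp w t = (1 / (2 * π) : ℝ) * ∫ v in log α..log β,
      w (Y * exp v) * Complex.exp (mellinPhase Y t v * Complex.I) := by
  have hvanish : ∀ v ∉ Icc (log α) (log β),
      w (Y * exp v) * Complex.exp (mellinPhase Y t v * Complex.I) = 0 := fun v hv => by
    refine mul_eq_zero_of_left (Function.notMem_support.1 fun hmem => hv ?_) _
    obtain ⟨hlow, hupp⟩ := hw hmem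
    rw [mul_comm Y, mul_le_mul_iff_left₀ hY] at hlow hupp
    exact ⟨(log_le_iff_le_exp hα).2 hlow, (le_log_iff_exp_le (hα.trans_le hαβ)).2 hupp⟩
  rw [mellinTruncExp, integral_Ioi_div_eq_integral_comp_mul_exp _ hY,
    intervalIntegral.integral_of_le (log_le_log hα hαβ), ← integral_Icc_eq_integral_Ioc,
    setIntegral_eq_integral_of_forall_compl_eq_zero hvanish]
  simp only [mul_assoc, eexp_mul_cpow_eq_cexp_mellinPhase hY]

theorem norm_mellinTruncExp_le (hα : 0 < α) (hαβ : α ≤ β) (hY : 0 < Y)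
    (hw : Function.support w ⊆ Icc (α * Y) (β * Y)) (t : ℝ) :
    ‖mellinTruncExp w t‖ ≤ ‖∫ v in log α..log β,
      w (Y * exp v) * Complex.exp (mellinPhase Y t v * Complex.I)‖ := by
  rw [mellinTruncExp_eq_integral_mellinPhase hα hαβ hY hw, norm_mul,
    Complex.norm_of_nonneg (by positivity)]
  refine mul_le_of_le_one_left (norm_nonneg _) ((div_le_one (by positivity)).2 ?_)
  linarith [pi_gt_three]

theorem exp_mem_Icc_of_mem_Icc_log (hα : 0 < α) (hβ : 0 < β) (hv : v ∈ Icc (log α) (log β)) :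
    exp v ∈ Icc α β :=
  ⟨(log_le_iff_le_exp hα).1 hv.1, (le_log_iff_exp_le hβ).1 hv.2⟩

theorem min_mul_le_abs_sub_of_notMem_Icc {u : ℝ} (hα : 0 < α) (hY : 0 < Y) (hu : u ∈ Icc α β)
    (ht : t ∉ Icc (π * α * Y) (4 * π * β * Y)) :
    min (1 / 4) α * (|t| + Y) ≤ |2 * π * (Y * u) - t| := by
  have hδ : min (1 / 4) α * (|t| + Y) ≤ 1 / 4 * |t| + α * Y := by
    rw [mul_add]
    gcongr
    exacts [min_le_left _ _, min_le_right _ _]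
  have hπ := pi_gt_three
  have hYα : 0 < α * Y := mul_pos hα hY
  have hlow : π * (α * Y) ≤ π * (Y * u) := by
    rw [mul_comm Y]
    gcongr
    exact hu.1
  have hupp : π * (Y * u) ≤ π * (β * Y) := by
    rw [mul_comm Y]
    gcongr
    exact hu.2
  have hπα : 3 * (α * Y) ≤ π * (α * Y) := by gcongr
  refine hδ.trans ?_
  rcases le_or_gt t 0 with ht0 | ht0
  · rw [abs_of_nonpos ht0]
    refine le_trans ?_ (le_abs_self _)
    linarith
  rw [abs_of_pos ht0]
  rcases lt_or_ge t (π * α * Y) with htα | htα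
  · refine le_trans ?_ (le_abs_self _)
    linarith
  · have htβ : 4 * π * β * Y < t := not_le.1 fun h => ht ⟨htα, h⟩
    refine le_trans ?_ (neg_le_abs _)
    linarith

theorem exists_norm_mellinTruncExp_le_div_pow {ι : Type*} {Y t : ι → ℝ} {w : ι → ℝ → ℂ}
    (hα : 0 < α) (hαβ : α ≤ β) (hw : ∀ i, IsInertWeight N α β C (Y i) (w i))
    (ht : ∀ i, t i ∉ Icc (π * α * Y i) (4 * π * β * Y i)) :
    ∃ K, ∀ i, ‖mellinTruncExp (w i) (t i)‖ ≤ K / (|t i| + Y i) ^ N := by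
  have hβ : 0 < β := hα.trans_le hαβ
  have hY (i : ι) : 0 < Y i := (hw i).scale_pos
  have hΛ (i : ι) : 0 < |t i| + Y i := add_pos_of_nonneg_of_pos (abs_nonneg _) (hY i)
  let ψ (i : ι) (v : ℝ) : ℝ := 2 * π * Y i / (|t i| + Y i) * exp v + -t i / (|t i| + Y i)
  have hΛψ (i : ι) (v : ℝ) : (|t i| + Y i) * ψ i v = 2 * π * (Y i * exp v) - t i := by
    have := (hΛ i).ne'
    simp only [ψ]
    field_simp
    ring
  have hψ : UniformContDiffOn (uIcc (log α) (log β)) ∅ N fun i v => (ψ i v : ℂ) := by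
    refine uniformContDiffOn_mul_exp_add (B := 2 * π) (B' := 1) isCompact_uIcc
      (fun i => ?_) fun i => ?_
    · have hYi := hY i
      rw [abs_of_nonneg (by positivity), div_le_iff₀ (hΛ i)]
      gcongr
      exact le_add_of_nonneg_left (abs_nonneg _)
    · rw [abs_div, abs_neg, abs_of_pos (hΛ i), div_le_one (hΛ i)]
      exact le_add_of_nonneg_right (hY i).le
  have hψδ (i : ι) (v : ℝ) (hv : v ∈ uIcc (log α) (log β)) : min (1 / 4) α ≤ |ψ i v| := by
    rw [uIcc_of_le (log_le_log hα hαβ)] at hv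
    have hphase := min_mul_le_abs_sub_of_notMem_Icc hα (hY i)
      (exp_mem_Icc_of_mem_Icc_log hα hβ hv) (ht i)
    rw [← hΛψ i v, abs_mul, abs_of_pos (hΛ i), mul_comm] at hphase
    exact le_of_mul_le_mul_left hphase (hΛ i)
  obtain ⟨K, hK⟩ := exists_norm_integral_mul_cexp_le_div_pow (by positivity) hΛ
    (fun i v _ => hΛψ i v ▸ hasDerivAt_mellinPhase (Y i) (t i) v) hψ hψδ
    (uniformContDiffOn_comp_mul_exp hα hβ hw)
  exact ⟨K, fun i =>
    (norm_mellinTruncExp_le hα hαβ (hY i) (hw i).support_subset (t i)).trans (hK i)⟩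

theorem exists_norm_mellinTruncExp_le_div_sqrt {ι : Type*} {Y : ι → ℝ} {w : ι → ℝ → ℂ}
    (hα : 0 < α) (hαβ : α ≤ β) (hw : ∀ i, IsInertWeight 1 α β C (Y i) (w i)) :
    ∃ K, ∀ i t, ‖mellinTruncExp (w i) t‖ ≤ K / √(Y i) := by
  have hβ : 0 < β := hα.trans_le hαβ
  have hlog := log_le_log hα hαβ
  obtain ⟨hW, W', hderiv, hW'⟩ := uniformContDiffOn_comp_mul_exp hα hβ hw
  obtain ⟨M, hM⟩ := hW.exists_bound
  obtain ⟨M', hM'⟩ := hW'.exists_bound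
  rw [uIcc_of_le hlog] at hM hM' hderiv
  refine ⟨(2 * π * M + (log β - log α) / 2 * M') / √(2 * π * α), fun i t => ?_⟩
  have hY := (hw i).scale_pos
  refine (norm_mellinTruncExp_le hα hαβ hY (hw i).support_subset t).trans ?_
  rw [div_div, ← sqrt_mul (by positivity)]
  refine norm_integral_mul_cexp_le_of_second_deriv hlog (by positivity)
    (fun v _ => hasDerivAt_mellinPhase (Y i) t v)
    (fun v _ => (((hasDerivAt_exp v).const_mul (Y i)).const_mul (2 * π)).sub_const t)
    (by fun_prop) (fun v hv => ?_) (hderiv i) (uIcc_of_le hlog ▸ hW'.continuousOn i)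
    (hW.eq_zero i _ (by simp)) (hW.eq_zero i _ (by simp)) (hM i) (hM' i)
  rw [sq_sqrt (by positivity), mul_assoc _ α, mul_comm α]
  gcongr
  exact (exp_mem_Icc_of_mem_Icc_log hα hβ hv).1

end MellinTransform

theorem mellin_trunc_exp_bounds_general {α β A : ℝ} {N : ℕ} (hα : 0 < α) (hαβ : α ≤ β)
    (hN : 1 ≤ N) (hAN : A ≤ N) (C : ℕ → ℝ) :
    ∃ C' : ℝ, 0 < C' ∧ ∀ Y w, 1 ≤ Y → IsInertWeight N α β C Y w →
      (∀ t, t ∉ Set.Icc (Real.pi * α * Y) (4 * Real.pi * β * Y) →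
        ‖mellinTruncExp w t‖ ≤ C' * (|t| + Y) ^ (-A)) ∧
      ∀ t, ‖mellinTruncExp w t‖ ≤ C' * Y ^ (-(1 : ℝ) / 2) := by
  obtain ⟨K, hK⟩ := exists_norm_mellinTruncExp_le_div_pow hα hαβ
    (fun i : {p : ℝ × (ℝ → ℂ) × ℝ // IsInertWeight N α β C p.1 p.2.1 ∧
      p.2.2 ∉ Set.Icc (Real.pi * α * p.1) (4 * Real.pi * β * p.1)} => i.2.1) fun i => i.2.2
  obtain ⟨L, hL⟩ := exists_norm_mellinTruncExp_le_div_sqrt hα hαβ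
    fun i : {p : ℝ × (ℝ → ℂ) // IsInertWeight N α β C p.1 p.2} => i.2.of_le hN
  refine ⟨max 1 (max K L), lt_max_of_lt_left one_pos,
    fun Y w hY hw => ⟨fun t ht => ?_, fun t => ?_⟩⟩
  · have hΛ : 1 ≤ |t| + Y := le_add_of_nonneg_of_le (abs_nonneg t) hY
    refine (hK ⟨(Y, w, t), hw, ht⟩).trans ?_
    rw [div_eq_mul_inv, ← Real.rpow_natCast, ← Real.rpow_neg (zero_le_one.trans hΛ)]
    gcongr
    exact (le_max_left K L).trans (le_max_right 1 _)
  · refine (hL ⟨(Y, w), hw⟩ t).trans ?_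
    rw [div_eq_mul_inv, Real.sqrt_eq_rpow, ← Real.rpow_neg hw.scale_pos.le, neg_div]
    gcongr
    exact (le_max_right K L).trans (le_max_right 1 _)

/-- **Mellin transform of a truncated exponential (inside Lemma 7.4)**: for `w` smooth
supported on `[Y/2, 3Y]` with `|w^{(j)}| ≤ C_j Y^{-j}`, the transform
`f(t) = (1/2π) ∫₀^∞ w(y) e(y) y^{-it} dy/y` satisfies `f(t) ≪ (|t| + Y)^{-A}` unless
`t ≍ Y`, and `f(t) ≪ Y^{-1/2}` always. -/
theorem mellin_trunc_exp_bounds (A : ℝ) (Cj : ℕ → ℝ) (hA : 0 < A) :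
    ∃ C' c₁ c₂ : ℝ, 0 < C' ∧ 0 < c₁ ∧ c₁ < c₂ ∧
      ∀ Y : ℝ, 1 ≤ Y →
        ∀ w : ℝ → ℂ, ContDiff ℝ (⊤ : ℕ∞) w → Function.support w ⊆ Set.Icc (Y / 2) (3 * Y) →
          (∀ (j : ℕ) (y : ℝ), ‖iteratedDeriv j w y‖ ≤ Cj j * Y ^ (-(j : ℝ))) →
          (∀ t : ℝ, t ∉ Set.Icc (c₁ * Y) (c₂ * Y) →
            ‖mellinTruncExp w t‖ ≤ C' * (|t| + Y) ^ (-A)) ∧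
          (∀ t : ℝ, ‖mellinTruncExp w t‖ ≤ C' * Y ^ (-(1 : ℝ) / 2)) := by
  obtain ⟨N, hN⟩ := exists_nat_ge (max A 1)
  obtain ⟨C', hC', hbound⟩ := mellin_trunc_exp_bounds_general (α := 1 / 2) (β := 3)
    (by norm_num) (by norm_num) (by exact_mod_cast (le_max_right A 1).trans hN)
    ((le_max_left A 1).trans hN) Cj
  refine ⟨C', Real.pi * (1 / 2), 4 * Real.pi * 3, hC', by positivity,
    by linarith [Real.pi_pos], fun Y hY w hw hsupp hderiv => hbound Y w hY ?_⟩
  exact ⟨zero_lt_one.trans_le hY, hw.of_le (by exact_mod_cast le_top),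
    hsupp.trans_eq (by rw [one_div_mul_eq_div]), fun j _ => hderiv j⟩
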